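/- arXiv:1810.05478 — 2 statements merged into one kernel-verified Lean document; each statement's English description precedes it below -/
import Mathlib

section
/- In the Gaussian sequence model, for every q ≥ 1 there exists a constant C_q > 0 depending only on q such that for all σ > 0, a > 0 and integers s, p with 1 ≤ s ≤ p/4 and s ≥ 8q log log p, the hard-thresholding estimator β̂^a defined by β̂^a_j(Y) = Y_j·1{|Y_j| ≥ t(max(a, t*))} satisfies: sup_{β ∈ Ω^p_{s,a}} E_β‖β̂^a(Y) − β‖_q^q ≤ C_q · inf over measurable estimators β̂ : ℝ^p → ℝ^p of sup_{β ∈ Ω^p_{s,a}} E_β‖β̂(Y) − β‖_q^q. -/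
/-!
Write `L = log (p / s - 1)`, `A = max a t*` and `τ = t(A)`, so that `σ ≤ τ ≤ A`. The point `τ` is
where the likelihood ratio of `N(A, σ²)` to `N(0, σ²)` equals `e^L`, so the errors
`α = P(N(A, σ²) < τ)` and `e^L P(N(0, σ²) ≥ τ)` add up to the Bayes error `testErr` of the test
between these two laws with weights `1` and `e^L`. Both risks turn out to be of order
`s A^q testErr + s σ^q`.

*Lower bound.* Cut `s * m ≤ p` coordinates, `m = ⌊p / s⌋ ≥ e^L`, into `s` blocks of length `m`.
Under the prior that leaves each block independently empty with probability `1/2`, and otherwise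
puts one spike of height `A` at a uniform position, every parameter is `s`-sparse. Comparing the
empty block with a spike at position `k` is a two-point problem in a single coordinate, in which the
empty block has `m` times the weight of the spike. Summing over blocks and positions gives
`minimax_lower_spike`: the minimax risk is at least a constant times `s A^q testErr`. A prior that
puts `s` known coordinates at `a` or `a + σ` gives the order `s σ^q` (`minimax_lower_noise`). Both
priors are instances of `block_bound`, and randomizing inside blocks makes the sparsity constraint
hold surely.

*Upper bound.* A zero coordinate costs `E |Y|^q 1{|Y| ≥ τ}`, which is at most a constant times
`τ^q P(Y ≥ τ)` because `τ ≥ σ` (`truncated_moment`); there are `p ≤ 2 s e^L` coordinates. A nonzero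
coordinate of size `b` costs at most the noise `σ^q` plus `b^q` times the probability of falling
below the threshold, which `miss_cost` bounds by a constant times `A^q α + σ^q`.
-/

open MeasureTheory ProbabilityTheory Filter
open scoped ENNReal NNReal BigOperators Classical

noncomputable section

/-- The Gaussian distribution `N(m, σ²)` on `ℝ`. -/
def gauss (m σ : ℝ) : Measure ℝ := gaussianReal m ⟨σ ^ 2, sq_nonneg σ⟩

/-- The standard Gaussian distribution on `ℝ`. -/
def stdG : Measure ℝ := gaussianReal 0 1

/-- The Gaussian sequence model: `Y` has independent coordinates `Y j ~ N(β j, σ²)`. -/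
def seqModel (p : ℕ) (σ : ℝ) (β : Fin p → ℝ) : Measure (Fin p → ℝ) :=
  Measure.pi fun j => gauss (β j) σ

/-- `Ω^p_{s,a}`: `s`-sparse vectors with nonzero coordinates at least `a` in absolute value. -/
def sparseSet (p s : ℕ) (a : ℝ) : Set (Fin p → ℝ) :=
  {β | (Finset.univ.filter fun i => β i ≠ 0).card ≤ s ∧ ∀ i, β i ≠ 0 → a ≤ |β i|}

/-- The risk `E_β ‖est(Y) − β‖_q^q` in the Gaussian sequence model. -/
def seqRisk (p : ℕ) (σ q : ℝ) (est : (Fin p → ℝ) → Fin p → ℝ) (β : Fin p → ℝ) : ℝ≥0∞ :=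
  ∫⁻ y, ENNReal.ofReal (∑ j, |est y j - β j| ^ q) ∂(seqModel p σ β)

/-- The maximal risk over `Ω^p_{s,a}`. -/
def maxRisk (p s : ℕ) (σ q a : ℝ) (est : (Fin p → ℝ) → Fin p → ℝ) : ℝ≥0∞ :=
  ⨆ β ∈ sparseSet p s a, seqRisk p σ q est β

/-- The minimax risk over `Ω^p_{s,a}` in the Gaussian sequence model. -/
def minimax (p s : ℕ) (σ q a : ℝ) : ℝ≥0∞ :=
  ⨅ (est : (Fin p → ℝ) → Fin p → ℝ) (_ : Measurable est), maxRisk p s σ q a est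

/-- `σ_q^q = E|η|^q` where `η ~ N(0, σ²)`. -/
def sigmaqq (σ q : ℝ) : ℝ := ∫ x, |x| ^ q ∂(gauss 0 σ)

/-- `P(σ ε > t)` for a standard Gaussian `ε`. -/
def PgtS (σ t : ℝ) : ℝ := (stdG {x | t < σ * x}).toReal

/-- `P(σ ε ≥ t)` for a standard Gaussian `ε`. -/
def PgeS (σ t : ℝ) : ℝ := (stdG {x | t ≤ σ * x}).toReal

/-- The threshold `t(a) = a/2 + σ² log(p/s − 1)/a`. -/
def tFun (p s : ℕ) (σ a : ℝ) : ℝ := a / 2 + σ ^ 2 * Real.log ((p : ℝ) / s - 1) / a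

/-- `t* = σ √(2 log(p/s − 1))`. -/
def tStar (p s : ℕ) (σ : ℝ) : ℝ := σ * Real.sqrt (2 * Real.log ((p : ℝ) / s - 1))

/-- `ψ(p,s,a,σ) = (p−s) P(σε > t(a)) + s P(σε > a − t(a))`. -/
def psi (p s : ℕ) (σ a : ℝ) : ℝ :=
  ((p : ℝ) - s) * PgtS σ (tFun p s σ a) + s * PgtS σ (a - tFun p s σ a)

/-- `ψ₊(p,s,a,σ) = (p−s) P(σε > t(a)) + s P(σε > (a − t(a))₊)`. -/
def psiPlus (p s : ℕ) (σ a : ℝ) : ℝ :=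
  ((p : ℝ) - s) * PgtS σ (tFun p s σ a) + s * PgtS σ (max (a - tFun p s σ a) 0)

/-- The hard-thresholding estimator at level `τ`. -/
def hardThr (p : ℕ) (τ : ℝ) : (Fin p → ℝ) → Fin p → ℝ :=
  fun y j => if τ ≤ |y j| then y j else 0

/-! ### Two-point lower bounds -/

section LowerBound

/-- The variance `σ²` of `gauss m σ`, as a nonnegative real. -/
def gvar (σ : ℝ) : ℝ≥0 := ⟨σ ^ 2, sq_nonneg σ⟩

lemma coe_gvar (σ : ℝ) : ((gvar σ : ℝ≥0) : ℝ) = σ ^ 2 := rfl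

lemma gvar_ne_zero {σ : ℝ} (hσ : 0 < σ) : gvar σ ≠ 0 := by
  rw [← NNReal.coe_ne_zero, coe_gvar]; positivity

lemma gauss_eq_gaussianReal (m σ : ℝ) : gauss m σ = gaussianReal m (gvar σ) := rfl

/-- The density of `N(m, σ²)`. -/
def gpdf (m σ x : ℝ) : ℝ≥0∞ :=
  ENNReal.ofReal ((√(2 * Real.pi * σ ^ 2))⁻¹) *
    ENNReal.ofReal (Real.exp (-(x - m) ^ 2 / (2 * σ ^ 2)))

lemma measurable_gpdf (m σ : ℝ) : Measurable (gpdf m σ) := by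
  unfold gpdf; fun_prop

lemma gauss_eq {σ : ℝ} (hσ : 0 < σ) (m : ℝ) :
    gauss m σ = volume.withDensity (gpdf m σ) := by
  rw [gauss_eq_gaussianReal, gaussianReal_of_var_ne_zero _ (gvar_ne_zero hσ)]
  congr 1
  funext x
  rw [gaussianPDF, gaussianPDFReal, ENNReal.ofReal_mul (by positivity), coe_gvar, gpdf]

instance instProbGauss (m σ : ℝ) : IsProbabilityMeasure (gauss m σ) := by
  rw [gauss_eq_gaussianReal]; infer_instance

instance instProbSeqModel (p : ℕ) (σ : ℝ) (β : Fin p → ℝ) :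
    IsProbabilityMeasure (seqModel p σ β) := by
  unfold seqModel; infer_instance

/-- The likelihood ratio of `N(u + a, σ²)` to `N(u, σ²)` is at most `e^L` to the left of
`u + a / 2 + σ² L / a`. -/
lemma gpdf_le_left {σ a : ℝ} (hσ : 0 < σ) (ha : 0 < a) (u L x : ℝ)
    (hx : x ≤ u + (a / 2 + σ ^ 2 * L / a)) :
    gpdf (u + a) σ x ≤
      ENNReal.ofReal (Real.exp L) * gpdf u σ x := by
  rw [gpdf, gpdf, mul_left_comm]
  gcongr
  rw [← ENNReal.ofReal_mul (by positivity), ← Real.exp_add]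
  apply ENNReal.ofReal_le_ofReal
  apply Real.exp_le_exp.mpr
  have h1 : a * (x - u) ≤ a ^ 2 / 2 + σ ^ 2 * L := by
    have : a * (x - u) ≤ a * (a / 2 + σ ^ 2 * L / a) := by gcongr; linarith
    calc _ ≤ _ := this
      _ = _ := by field_simp
  have h2 : L + -(x - u) ^ 2 / (2 * σ ^ 2) = (2 * σ ^ 2 * L - (x - u) ^ 2) / (2 * σ ^ 2) := by
    field_simp; ring
  rw [h2]
  gcongr
  nlinarith

lemma gpdf_le_right {σ a : ℝ} (hσ : 0 < σ) (ha : 0 < a) (u L x : ℝ)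
    (hx : u + (a / 2 + σ ^ 2 * L / a) ≤ x) :
    ENNReal.ofReal (Real.exp L) * gpdf u σ x ≤
      gpdf (u + a) σ x := by
  rw [gpdf, gpdf, mul_left_comm]
  gcongr
  rw [← ENNReal.ofReal_mul (by positivity), ← Real.exp_add]
  apply ENNReal.ofReal_le_ofReal
  apply Real.exp_le_exp.mpr
  have h1 : a ^ 2 / 2 + σ ^ 2 * L ≤ a * (x - u) := by
    have : a * (a / 2 + σ ^ 2 * L / a) ≤ a * (x - u) := by gcongr; linarith
    calc _ = _ := by field_simp
      _ ≤ _ := this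
  have h2 : L + -(x - u) ^ 2 / (2 * σ ^ 2) = (2 * σ ^ 2 * L - (x - u) ^ 2) / (2 * σ ^ 2) := by
    field_simp; ring
  rw [h2]
  gcongr
  nlinarith

/-- The error of the Bayes test between `N(u, σ²)`, with weight `e^L`, and `N(u + a, σ²)`: the
likelihood ratio crosses `e^L` at `u + a / 2 + σ² L / a`. -/
def testErr (σ L u a : ℝ) : ℝ≥0∞ :=
  gauss (u + a) σ (Set.Iio (u + (a / 2 + σ ^ 2 * L / a))) +
    ENNReal.ofReal (Real.exp L) * gauss u σ (Set.Ici (u + (a / 2 + σ ^ 2 * L / a)))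

/-- Two-point bound on the line: if the losses `g` and `h` sum to at least `D` everywhere, then
their weighted expectations under the two Gaussians sum to at least `D` times the Bayes testing
error. To the left of the crossing point `N(u + a, σ²)` has the smaller weighted density, to the
right `N(u, σ²)`. -/
lemma two_point_real {σ a : ℝ} (hσ : 0 < σ) (ha : 0 < a) (u L : ℝ) {g h : ℝ → ℝ≥0∞}
    (hg : Measurable g) (hh : Measurable h) {D : ℝ≥0∞} (hD : ∀ t, D ≤ g t + h t) :
    D * testErr σ L u a ≤
      ENNReal.ofReal (Real.exp L) * ∫⁻ t, g t ∂(gauss u σ) + ∫⁻ t, h t ∂(gauss (u + a) σ) := by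
  set T := u + (a / 2 + σ ^ 2 * L / a) with hT
  set w := ENNReal.ofReal (Real.exp L) with hw
  have hv : ∀ m, Measurable (gpdf m σ) :=
    fun m => measurable_gpdf _ _
  have e1 : ∀ (f : ℝ → ℝ≥0∞) (m : ℝ) (S : Set ℝ), Measurable f → MeasurableSet S →
      ∫⁻ t in S, f t ∂(gauss m σ) =
        ∫⁻ t in S, gpdf m σ t * f t := by
    intro f m S hf hS
    rw [gauss_eq hσ, restrict_withDensity hS,
      lintegral_withDensity_eq_lintegral_mul _ (hv m) hf]
    rfl
  have e2 : ∀ (f : ℝ → ℝ≥0∞) (m : ℝ), ∫⁻ t, f t ∂(gauss m σ) =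
      ∫⁻ t in Set.Iio T, f t ∂(gauss m σ) + ∫⁻ t in Set.Ici T, f t ∂(gauss m σ) := by
    intro f m
    rw [← lintegral_add_compl f (measurableSet_Iio (a := T)), Set.compl_Iio]
  have hL : ∫⁻ t in Set.Iio T, g t ∂(gauss (u + a) σ) ≤
      w * ∫⁻ t in Set.Iio T, g t ∂(gauss u σ) := by
    rw [e1 g _ _ hg measurableSet_Iio, e1 g _ _ hg measurableSet_Iio,
      ← lintegral_const_mul _ ((hv _).fun_mul hg)]
    apply setLIntegral_mono (((hv _).fun_mul hg).const_mul _)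
    intro x hx
    rw [← mul_assoc]
    gcongr
    exact gpdf_le_left hσ ha u L x (le_of_lt hx)
  have hR : w * ∫⁻ t in Set.Ici T, h t ∂(gauss u σ) ≤
      ∫⁻ t in Set.Ici T, h t ∂(gauss (u + a) σ) := by
    rw [e1 h _ _ hh measurableSet_Ici, e1 h _ _ hh measurableSet_Ici,
      ← lintegral_const_mul _ ((hv _).fun_mul hh)]
    apply setLIntegral_mono ((hv _).fun_mul hh)
    intro x hx
    rw [← mul_assoc]
    gcongr
    exact gpdf_le_right hσ ha u L x hx
  have hc : ∀ (m : ℝ) (S : Set ℝ), D * gauss m σ S ≤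
      ∫⁻ t in S, g t ∂(gauss m σ) + ∫⁻ t in S, h t ∂(gauss m σ) := by
    intro m S
    rw [← lintegral_add_left hg, ← setLIntegral_const]
    exact lintegral_mono fun t => hD t
  calc D * testErr σ L u a
      = D * gauss (u + a) σ (Set.Iio T) + w * (D * gauss u σ (Set.Ici T)) := by
        rw [testErr]; ring
    _ ≤ (∫⁻ t in Set.Iio T, g t ∂(gauss (u + a) σ) + ∫⁻ t in Set.Iio T, h t ∂(gauss (u + a) σ))
        + w * (∫⁻ t in Set.Ici T, g t ∂(gauss u σ) + ∫⁻ t in Set.Ici T, h t ∂(gauss u σ)) := by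
        gcongr
        · exact hc _ _
        · exact hc _ _
    _ = (∫⁻ t in Set.Iio T, g t ∂(gauss (u + a) σ) + w * ∫⁻ t in Set.Ici T, g t ∂(gauss u σ))
        + (∫⁻ t in Set.Iio T, h t ∂(gauss (u + a) σ)
          + w * ∫⁻ t in Set.Ici T, h t ∂(gauss u σ)) := by ring
    _ ≤ (w * ∫⁻ t in Set.Iio T, g t ∂(gauss u σ) + w * ∫⁻ t in Set.Ici T, g t ∂(gauss u σ))
        + (∫⁻ t in Set.Iio T, h t ∂(gauss (u + a) σ)
          + ∫⁻ t in Set.Ici T, h t ∂(gauss (u + a) σ)) := by gcongr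
    _ = _ := by rw [e2 g u, e2 h (u + a), mul_add]

/-- Integration under the sequence model, with the `j`-th coordinate integrated innermost; the
outer marginal does not depend on the mean of that coordinate. -/
lemma lintegral_seqModel_update {p : ℕ} (σ : ℝ) (γ : Fin p → ℝ) (j : Fin p) (u : ℝ)
    {F : (Fin p → ℝ) → ℝ≥0∞} (hF : Measurable F) (x : Fin p → ℝ) :
    ∫⁻ y, F y ∂(seqModel p σ (Function.update γ j u)) =
      lmarginal (fun i => gauss (γ i) σ) (Finset.univ.erase j)
        (fun y => ∫⁻ t, F (Function.update y j t) ∂(gauss u σ)) x := by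
  rw [seqModel, lintegral_eq_lmarginal_univ x, lmarginal_erase' _ hF (Finset.mem_univ j)]
  have h : (fun i : ↥(Finset.univ.erase j) =>
      gauss (Function.update γ j u (i : Fin p)) σ) = fun i : ↥(Finset.univ.erase j) => gauss (γ (i : Fin p)) σ := by
    funext i
    rw [Function.update_of_ne (Finset.ne_of_mem_erase i.2)]
  simp only [lmarginal, Function.update_self]
  rw [h]

/-- The two-point bound for sequence models whose means differ in coordinate `j` only: condition on
the other coordinates, whose joint law is the same in both models. -/
lemma two_point_seq {p : ℕ} {σ a : ℝ} (hσ : 0 < σ) (ha : 0 < a) (γ : Fin p → ℝ) (j : Fin p)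
    (u L : ℝ) {G H : (Fin p → ℝ) → ℝ≥0∞} (hG : Measurable G) (hH : Measurable H) {D : ℝ≥0∞}
    (hD : ∀ y, D ≤ G y + H y) :
    D * testErr σ L u a ≤
      ENNReal.ofReal (Real.exp L) * ∫⁻ y, G y ∂(seqModel p σ (Function.update γ j u)) +
        ∫⁻ y, H y ∂(seqModel p σ (Function.update γ j (u + a))) := by
  rw [lintegral_seqModel_update σ γ j u hG 0, lintegral_seqModel_update σ γ j (u + a) hH 0]
  have hm : ∀ (F : (Fin p → ℝ) → ℝ≥0∞) (v : ℝ), Measurable F → Measurable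
      (fun y => ∫⁻ t, F (Function.update y j t) ∂(gauss v σ)) := by
    intro F v hF
    apply Measurable.lintegral_prod_right'
      (f := fun z : (Fin p → ℝ) × ℝ => F (Function.update z.1 j z.2))
    apply hF.comp
    rw [measurable_pi_iff]
    intro i
    by_cases hi : i = j
    · subst hi; simpa using measurable_snd
    · simp only [Function.update_of_ne hi]; fun_prop
  have hm' := fun F v hF => (hm F v hF).comp
    (measurable_updateFinset (s := Finset.univ.erase j) (x := (0 : Fin p → ℝ)))
  simp only [lmarginal]
  have hG' := hm' G u hG
  simp only [Function.comp_def] at hG'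
  rw [← lintegral_const_mul _ hG', ← lintegral_add_left (hG'.const_mul _)]
  calc D * testErr σ L u a
      = ∫⁻ _, D * testErr σ L u a
        ∂(Measure.pi fun i : (Finset.univ.erase j : Finset (Fin p)) => gauss (γ i) σ) := by simp
    _ ≤ _ := by
      apply lintegral_mono
      intro y
      apply two_point_real hσ ha u L (hG.comp (measurable_update _))
        (hH.comp (measurable_update _))
      intro t
      exact hD _

/-- The contribution of coordinate `j` to the risk. -/
def coordRisk (p : ℕ) (σ q : ℝ) (est : (Fin p → ℝ) → Fin p → ℝ) (β : Fin p → ℝ)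
    (j : Fin p) : ℝ≥0∞ :=
  ∫⁻ y, ENNReal.ofReal (|est y j - β j| ^ q) ∂(seqModel p σ β)

lemma measurable_loss {p : ℕ} (q : ℝ) {est : (Fin p → ℝ) → Fin p → ℝ} (hest : Measurable est)
    (j : Fin p) (b : ℝ) : Measurable fun y => ENNReal.ofReal (|est y j - b| ^ q) := by
  have := (measurable_pi_apply j).comp hest
  have h2 : Measurable fun y => est y j := this
  fun_prop

lemma seqRisk_eq_sum {p : ℕ} (σ q : ℝ) {est : (Fin p → ℝ) → Fin p → ℝ} (hest : Measurable est)
    (β : Fin p → ℝ) : seqRisk p σ q est β = ∑ j, coordRisk p σ q est β j := by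
  unfold seqRisk coordRisk
  rw [← lintegral_finsetSum _ fun j _ => measurable_loss q hest j (β j)]
  refine lintegral_congr fun y => ?_
  rw [ENNReal.ofReal_sum_of_nonneg]
  intros; positivity

/-- Two parameters that differ by `a > 0` in coordinate `j` only cannot both be estimated well
there. -/
lemma two_point_coordRisk {p : ℕ} {σ a q : ℝ} (hσ : 0 < σ) (ha : 0 < a) (hq : 1 ≤ q)
    {est : (Fin p → ℝ) → Fin p → ℝ} (hest : Measurable est) (γ : Fin p → ℝ) (j : Fin p)
    (u L : ℝ) :
    ENNReal.ofReal ((a / 2) ^ q) * testErr σ L u a ≤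
      ENNReal.ofReal (Real.exp L) * coordRisk p σ q est (Function.update γ j u) j +
        coordRisk p σ q est (Function.update γ j (u + a)) j := by
  unfold coordRisk
  simp only [Function.update_self]
  apply two_point_seq hσ ha γ j u L (measurable_loss q hest j u)
    (measurable_loss q hest j (u + a))
  intro y
  set x := est y j
  have h : a / 2 ≤ |x - u| ∨ a / 2 ≤ |x - (u + a)| := by
    by_contra! hcon
    have h1 := abs_lt.mp hcon.1
    have h2 := abs_lt.mp hcon.2
    linarith [h1.1, h1.2, h2.1, h2.2]
  rcases h with h | h
  · refine le_add_right (ENNReal.ofReal_le_ofReal ?_)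
    exact Real.rpow_le_rpow (by positivity) h (by linarith)
  · refine le_add_left (ENNReal.ofReal_le_ofReal ?_)
    exact Real.rpow_le_rpow (by positivity) h (by linarith)

/-! ### Block priors -/

/-- The parameter assembled from `s` disjoint blocks of `m` coordinates, block `i` occupying the
coordinates `e (i, ·)`: if `κ i = c`, the only possibly nonzero entry of block `i` is `val c`, at
position `pos c`. Coordinates outside the blocks are zero. -/
def blockVec {p s m : ℕ} {C : Type} (e : Fin s × Fin m → Fin p) (pos : C → Fin m) (val : C → ℝ)
    (κ : Fin s → C) : Fin p → ℝ :=
  Function.extend e (fun x => if x.2 = pos (κ x.1) then val (κ x.1) else 0) 0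

section Block

variable {p s m : ℕ} {C : Type} {e : Fin s × Fin m → Fin p}

lemma blockVec_apply (he : Function.Injective e) (pos : C → Fin m) (val : C → ℝ)
    (κ : Fin s → C) (i : Fin s) (k : Fin m) :
    blockVec e pos val κ (e (i, k)) = if k = pos (κ i) then val (κ i) else 0 :=
  he.extend_apply _ _ _

lemma blockVec_mem (he : Function.Injective e) (pos : C → Fin m) (val : C → ℝ) {a : ℝ}
    (hval : ∀ c, val c = 0 ∨ a ≤ |val c|) (κ : Fin s → C) :
    blockVec e pos val κ ∈ sparseSet p s a := by
  have key : ∀ j, blockVec e pos val κ j ≠ 0 → ∃ i, j = e (i, pos (κ i)) ∧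
      blockVec e pos val κ j = val (κ i) := by
    intro j hj
    by_cases h : ∃ x, e x = j
    · obtain ⟨⟨i, k⟩, rfl⟩ := h
      rw [blockVec_apply he] at hj ⊢
      by_cases hk : k = pos (κ i)
      · exact ⟨i, by rw [hk], by simp [hk]⟩
      · simp [hk] at hj
    · exact absurd (Function.extend_apply' _ _ _ h) hj
  constructor
  · calc _ ≤ (Finset.univ.image fun i : Fin s => e (i, pos (κ i))).card := by
          apply Finset.card_le_card
          intro j hj
          obtain ⟨i, hi, -⟩ := key j (by simpa using hj)
          exact Finset.mem_image.mpr ⟨i, Finset.mem_univ _, hi.symm⟩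
      _ ≤ _ := Finset.card_image_le
      _ = s := by simp
  · intro j hj
    obtain ⟨i, -, hi⟩ := key j hj
    rw [hi] at hj ⊢
    exact (hval _).resolve_left hj

/-- If the content `c'` is empty or has its spike at position `pos c`, then replacing it by `c` in
block `i` changes only the coordinate at `pos c`. -/
lemma blockVec_update_eq (he : Function.Injective e) (pos : C → Fin m) (val : C → ℝ)
    (κ : Fin s → C) (i : Fin s) (c c' : C) (hc : val c' = 0 ∨ pos c' = pos c) :
    blockVec e pos val (Function.update κ i c) =
      Function.update (blockVec e pos val (Function.update κ i c')) (e (i, pos c)) (val c) := by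
  funext j
  by_cases h : ∃ x, e x = j
  · obtain ⟨⟨i', k⟩, rfl⟩ := h
    by_cases hi : i' = i
    · subst hi
      by_cases hk : k = pos c
      · subst hk; simp [blockVec_apply he]
      · rw [Function.update_of_ne (fun h => hk (by simpa using he h)), blockVec_apply he,
          blockVec_apply he]
        rcases hc with hc | hc <;> simp [hk, hc]
    · rw [Function.update_of_ne (fun h => hi (by simpa using congrArg Prod.fst (he h))),
        blockVec_apply he, blockVec_apply he, Function.update_of_ne hi, Function.update_of_ne hi]
  · rw [Function.update_of_ne (fun h' => h ⟨_, h'.symm⟩)]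
    unfold blockVec
    rw [Function.extend_apply' _ _ _ h, Function.extend_apply' _ _ _ h]

/-- Resampling one coordinate of a uniformly distributed `κ` leaves its law unchanged. -/
lemma sum_sum_update [Fintype C] (F : (Fin s → C) → ℝ≥0∞) (i : Fin s) :
    ∑ κ, ∑ c, F (Function.update κ i c) = Fintype.card C * ∑ κ, F κ := by
  have h : ∑ x : (Fin s → C) × C, F (Function.update x.1 i x.2) =
      ∑ x : (Fin s → C) × C, F x.1 := by
    apply Fintype.sum_equiv
      (Function.Involutive.toPerm (fun x : (Fin s → C) × C => (Function.update x.1 i x.2, x.1 i))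
        (fun x => by simp))
    intro x
    rfl
  rw [Fintype.sum_prod_type, Fintype.sum_prod_type] at h
  rw [h]
  simp [Finset.mul_sum]

/-- The maximal risk dominates the Bayes risk for the prior drawing the contents of the `s` blocks
independently and uniformly from `C`; and the Bayes risk is a sum over blocks. -/
lemma block_bound [Fintype C] [Nonempty C] (he : Function.Injective e) (pos : C → Fin m)
    (val : C → ℝ) {σ q a : ℝ} (hval : ∀ c, val c = 0 ∨ a ≤ |val c|)
    {est : (Fin p → ℝ) → Fin p → ℝ} (hest : Measurable est) {B : ℝ≥0∞}
    (hB : ∀ κ i, B ≤ ∑ c, ∑ k, coordRisk p σ q est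
      (blockVec e pos val (Function.update κ i c)) (e (i, k))) :
    s * B ≤ Fintype.card C * maxRisk p s σ q a est := by
  set N : ℝ≥0∞ := ((Fintype.card (Fin s → C) : ℕ) : ℝ≥0∞) with hN
  have hN0 : N ≠ 0 := by simp [hN]
  have hNt : N ≠ ∞ := by simp [hN]
  set F : Fin s → (Fin s → C) → ℝ≥0∞ := fun i κ =>
    ∑ k, coordRisk p σ q est (blockVec e pos val κ) (e (i, k)) with hF
  have h1 : ∀ κ, ∑ i, F i κ ≤ maxRisk p s σ q a est := by
    intro κ
    calc ∑ i, F i κ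
        = ∑ x : Fin s × Fin m, coordRisk p σ q est (blockVec e pos val κ) (e x) := by
          rw [Fintype.sum_prod_type]
      _ = ∑ j ∈ Finset.univ.map ⟨e, he⟩, coordRisk p σ q est (blockVec e pos val κ) j := by
          rw [Finset.sum_map]; rfl
      _ ≤ ∑ j, coordRisk p σ q est (blockVec e pos val κ) j :=
          Finset.sum_le_sum_of_subset (Finset.subset_univ _)
      _ = seqRisk p σ q est (blockVec e pos val κ) := (seqRisk_eq_sum σ q hest _).symm
      _ ≤ _ := le_iSup₂_of_le _ (blockVec_mem he pos val hval κ) le_rfl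
  have h2 : ∀ i, N * B ≤ Fintype.card C * ∑ κ, F i κ := by
    intro i
    rw [← sum_sum_update]
    calc N * B = ∑ _κ : Fin s → C, B := by simp [hN]
      _ ≤ _ := Finset.sum_le_sum fun κ _ => hB κ i
  have h3 : N * (s * B) ≤ N * (Fintype.card C * maxRisk p s σ q a est) := by
    calc N * (s * B) = ∑ _i : Fin s, N * B := by simp; ring
      _ ≤ ∑ i, Fintype.card C * ∑ κ, F i κ := Finset.sum_le_sum fun i _ => h2 i
      _ = Fintype.card C * ∑ κ, ∑ i, F i κ := by rw [← Finset.mul_sum, Finset.sum_comm]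
      _ ≤ Fintype.card C * ∑ _κ : Fin s → C, maxRisk p s σ q a est := by
          gcongr with κ; exact h1 κ
      _ = _ := by simp [hN]; ring
  exact (ENNReal.mul_le_mul_iff_right hN0 hNt).mp h3

end Block

lemma exists_blocks {p s m : ℕ} (h : s * m ≤ p) :
    ∃ e : Fin s × Fin m → Fin p, Function.Injective e :=
  ⟨fun x => Fin.castLE h (finProdFinEquiv x),
    (Fin.castLE_injective h).comp finProdFinEquiv.injective⟩

/-- The spike prior: each block is empty with probability `1/2`, and otherwise carries one spike
of height `a` at a uniform position. -/
lemma minimax_lower_spike {p s m : ℕ} (hm : 0 < m) (hsm : s * m ≤ p) {σ a q L : ℝ} (hσ : 0 < σ)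
    (ha : 0 < a) (hq : 1 ≤ q) (hL : Real.exp L ≤ m) :
    s * (ENNReal.ofReal ((a / 2) ^ q) * testErr σ L 0 a) ≤ 2 * minimax p s σ q a := by
  obtain ⟨e, he⟩ := exists_blocks hsm
  have : Nonempty (Fin m) := ⟨⟨0, hm⟩⟩
  set B := ENNReal.ofReal ((a / 2) ^ q) * testErr σ L 0 a with hBdef
  rw [minimax, ENNReal.mul_iInf_of_ne (by simp) (by simp)]
  refine le_iInf fun est => ?_
  rw [ENNReal.mul_iInf_of_ne (by simp) (by simp)]
  refine le_iInf fun hest => ?_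
  have hmain := block_bound (C := Bool × Fin m) (σ := σ) (q := q) (a := a) (est := est)
    (B := m * B) he (fun c => c.2)
    (fun c => if c.1 then a else 0) (by
      rintro ⟨b, k⟩
      cases b
      · simp
      · right; simpa using le_abs_self a) hest ?_
  · have hm0 : (m : ℝ≥0∞) ≠ 0 := by simpa using hm.ne'
    apply (ENNReal.mul_le_mul_iff_right hm0 (by simp)).mp
    calc (m : ℝ≥0∞) * (s * B) = s * (m * B) := by ring
      _ ≤ _ := hmain
      _ = _ := by simp; ring
  intro κ i
  -- Contents `(true, k)` are a spike at `k`; all the contents `(false, k)` are the empty block.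
  set pos : Bool × Fin m → Fin m := fun c => c.2
  set val : Bool × Fin m → ℝ := fun c => if c.1 then a else 0
  set R : Bool × Fin m → Fin m → ℝ≥0∞ := fun c k => coordRisk p σ q est
      (blockVec e pos val (Function.update κ i c)) (e (i, k)) with hR
  change _ ≤ ∑ c, ∑ k, R c k
  have h1 : ∀ k, B ≤ ∑ k', R (false, k') k + R (true, k) k := by
    intro k
    -- The `m` empty contents give the empty block `m ≥ e^L` times the weight of a given spike.
    have h2 : ∀ k', R (false, k') k = R (false, k) k := by
      intro k'
      simp only [hR]
      congr 1
      rw [blockVec_update_eq he pos val κ i (false, k') (false, k) (by simp [val])]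
      apply Function.update_eq_self_iff.mpr
      simp [blockVec_apply he, val]
    simp_rw [h2]
    have h3 := two_point_coordRisk hσ ha hq hest
      (blockVec e pos val (Function.update κ i (false, k))) (e (i, k)) 0 L
    rw [Function.update_eq_self_iff.mpr (by simp [blockVec_apply he, val]), zero_add] at h3
    have h4 := blockVec_update_eq he pos val κ i (true, k) (false, k) (by simp [val])
    have h5 : R (true, k) k = coordRisk p σ q est (Function.update
        (blockVec e pos val (Function.update κ i (false, k))) (e (i, k)) a) (e (i, k)) := by
      simp only [hR]; rw [h4]; simp [val, pos]
    rw [h5]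
    refine h3.trans ?_
    rw [Finset.sum_const, Finset.card_univ, Fintype.card_fin, nsmul_eq_mul]
    gcongr
    calc ENNReal.ofReal (Real.exp L) ≤ ENNReal.ofReal m := ENNReal.ofReal_le_ofReal hL
      _ = m := by simp
  calc (m : ℝ≥0∞) * B = ∑ _k : Fin m, B := by simp
    _ ≤ ∑ k, (∑ k', R (false, k') k + R (true, k) k) := Finset.sum_le_sum fun k _ => h1 k
    _ = ∑ k', ∑ k, R (false, k') k + ∑ k, R (true, k) k := by
        rw [Finset.sum_add_distrib, Finset.sum_comm]
    _ ≤ ∑ k', ∑ k, R (false, k') k + ∑ k', ∑ k, R (true, k') k := by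
        gcongr with k'
        exact Finset.single_le_sum (f := fun k => R (true, k') k) (fun _ _ => zero_le)
          (Finset.mem_univ k')
    _ = ∑ c, ∑ k, R c k := by
        rw [Fintype.sum_prod_type, Fintype.sum_bool, add_comm]

/-- Even with known support the values of `s` spikes have to be estimated: the prior puts each of
them at `a` or `a + σ`. -/
lemma minimax_lower_noise {p s : ℕ} (hsp : s ≤ p) {σ a q : ℝ} (hσ : 0 < σ)
    (hq : 1 ≤ q) :
    s * (ENNReal.ofReal ((σ / 2) ^ q) * testErr σ 0 a σ) ≤ 2 * minimax p s σ q a := by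
  obtain ⟨e, he⟩ := exists_blocks (m := 1) (by simpa using hsp)
  rw [minimax, ENNReal.mul_iInf_of_ne (by simp) (by simp)]
  refine le_iInf fun est => ?_
  rw [ENNReal.mul_iInf_of_ne (by simp) (by simp)]
  refine le_iInf fun hest => ?_
  set pos : Bool → Fin 1 := fun _ => 0
  set val : Bool → ℝ := fun c => if c then a + σ else a
  have hmain := block_bound (C := Bool) (σ := σ) (q := q) (a := a) (est := est)
    (B := ENNReal.ofReal ((σ / 2) ^ q) * testErr σ 0 a σ) he pos val (by
      rintro (_ | _)
      · right; simpa [val] using le_abs_self a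
      · right; simp only [val, if_true]; linarith [le_abs_self (a + σ)]) hest ?_
  · simpa using hmain
  intro κ i
  have h3 := two_point_coordRisk hσ hσ hq hest
    (blockVec e pos val (Function.update κ i false)) (e (i, 0)) a 0
  rw [Function.update_eq_self_iff.mpr (by simp [blockVec_apply he, val, pos]), Real.exp_zero,
    ENNReal.ofReal_one, one_mul] at h3
  have h4 := blockVec_update_eq he pos val κ i true false (by simp [pos])
  refine h3.trans (le_of_eq ?_)
  rw [Fintype.sum_bool, h4, add_comm]
  simp [val, pos]

end LowerBound

/-! ### Gaussian computations -/

section UpperBound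

lemma gauss_map (b σ : ℝ) : gauss b σ = (gauss 0 1).map (fun x => b + σ * x) := by
  have h : (fun x : ℝ => b + σ * x) = (fun x => b + x) ∘ (fun x => σ * x) := rfl
  rw [h, ← Measure.map_map (by fun_prop) (by fun_prop), gauss_eq_gaussianReal 0 1,
    gaussianReal_map_const_mul, gaussianReal_map_const_add, gauss_eq_gaussianReal]
  congr 1
  · ring
  · apply NNReal.coe_injective
    rw [NNReal.coe_mul, coe_gvar, coe_gvar, NNReal.coe_mk]; ring

lemma lintegral_gauss (b σ : ℝ) {f : ℝ → ℝ≥0∞} (hf : Measurable f) :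
    ∫⁻ y, f y ∂(gauss b σ) = ∫⁻ x, f (b + σ * x) ∂(gauss 0 1) := by
  rw [gauss_map, lintegral_map hf (by fun_prop)]

lemma lintegral_gauss_neg (b σ : ℝ) {f : ℝ → ℝ≥0∞} (hf : Measurable f) :
    ∫⁻ y, f (-y) ∂(gauss b σ) = ∫⁻ y, f y ∂(gauss (-b) σ) := by
  have h : (gauss b σ).map (fun x => -x) = gauss (-b) σ := gaussianReal_map_neg
  rw [← h, lintegral_map hf (by fun_prop)]

lemma gauss_Iio {σ : ℝ} (hσ : 0 < σ) (b t : ℝ) :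
    gauss b σ (Set.Iio t) = gauss 0 1 (Set.Iio ((t - b) / σ)) := by
  rw [gauss_map, Measure.map_apply (by fun_prop) measurableSet_Iio]
  congr 1
  ext x
  simp only [Set.mem_preimage, Set.mem_Iio, lt_div_iff₀ hσ]
  constructor <;> intro h <;> linarith

lemma gauss_Ici {σ : ℝ} (hσ : 0 < σ) (b t : ℝ) :
    gauss b σ (Set.Ici t) = gauss 0 1 (Set.Ici ((t - b) / σ)) := by
  rw [gauss_map, Measure.map_apply (by fun_prop) measurableSet_Ici]
  congr 1
  ext x
  simp only [Set.mem_preimage, Set.mem_Ici, div_le_iff₀ hσ]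
  constructor <;> intro h <;> linarith

/-- The probability that a standard Gaussian is below `-1/2`. -/
def lowProb : ℝ≥0∞ := gauss 0 1 (Set.Iio (-1 / 2))

lemma lowProb_ne_zero : lowProb ≠ 0 := by
  intro h
  have := gaussianReal_absolutelyContinuous' 0 (gvar_ne_zero one_pos) h
  simp at this

lemma lowProb_ne_top : lowProb ≠ ∞ := measure_ne_top _ _

/-- The absolute moment of order `q` of a standard Gaussian. -/
def absMoment (q : ℝ) : ℝ≥0∞ := ∫⁻ x, ENNReal.ofReal (|x| ^ q) ∂(gauss 0 1)

lemma absMoment_ne_top {q : ℝ} (hq : 1 ≤ q) : absMoment q ≠ ∞ := by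
  have hq0 : (0 : ℝ) < q := by linarith
  have h := memLp_id_gaussianReal' (μ := 0) (v := gvar 1) (ENNReal.ofReal q) ENNReal.ofReal_ne_top
  have h2 := lintegral_rpow_enorm_lt_top_of_eLpNorm_lt_top (by simpa using hq0)
    ENNReal.ofReal_ne_top h.2
  rw [ENNReal.toReal_ofReal hq0.le] at h2
  refine ne_of_lt (lt_of_le_of_lt (le_of_eq ?_) h2)
  refine lintegral_congr fun x => ?_
  rw [← ENNReal.ofReal_rpow_of_nonneg (abs_nonneg x) (by linarith), ← Real.enorm_eq_ofReal_abs]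
  rfl

lemma lintegral_noise {σ q : ℝ} (hσ : 0 < σ) (b : ℝ) :
    ∫⁻ y, ENNReal.ofReal (|y - b| ^ q) ∂(gauss b σ) = ENNReal.ofReal (σ ^ q) * absMoment q := by
  rw [lintegral_gauss b σ (by fun_prop), absMoment, ← lintegral_const_mul _ (by fun_prop)]
  refine lintegral_congr fun x => ?_
  rw [add_sub_cancel_left, abs_mul, abs_of_pos hσ, Real.mul_rpow hσ.le (abs_nonneg x),
    ENNReal.ofReal_mul (by positivity)]

lemma rpow_le_exp {q x : ℝ} (hq : 1 ≤ q) (hx : 0 ≤ x) :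
    x ^ q ≤ (2 * q) ^ q * Real.exp (x / 2) := by
  have h1 : x / (2 * q) ≤ Real.exp (x / (2 * q)) := by
    linarith [Real.add_one_le_exp (x / (2 * q))]
  calc x ^ q = (2 * q) ^ q * (x / (2 * q)) ^ q := by
        rw [← Real.mul_rpow (by linarith) (by positivity)]
        congr 1; field_simp
    _ ≤ (2 * q) ^ q * (Real.exp (x / (2 * q))) ^ q := by gcongr
    _ = _ := by
        rw [← Real.exp_mul]
        congr 2; field_simp

/-- The constant in `rpow_mul_gpdf_le`, independent of `σ` and `τ`. -/
def tailConst (q : ℝ) : ℝ := (2 * q) ^ q * Real.exp (1 / 2)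

lemma tailConst_nonneg {q : ℝ} (hq : 1 ≤ q) : 0 ≤ tailConst q := by
  unfold tailConst; positivity

/-- Beyond `τ ≥ σ`, the function `y ^ q` times the density of `N(0, σ²)` is dominated by the
density of `2 Z - τ`, where `Z ~ N(0, σ²)`. -/
lemma rpow_mul_gpdf_le {σ τ q y : ℝ} (hσ : 0 < σ) (hτ : σ ≤ τ) (hq : 1 ≤ q) (hy : τ ≤ y) :
    gpdf 0 σ y * ENNReal.ofReal (y ^ q) ≤
      ENNReal.ofReal (2 * tailConst q * τ ^ q) * gpdf (-τ) (2 * σ) y := by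
  have hτ0 : 0 < τ := hσ.trans_le hτ
  have hy0 : 0 < y := hτ0.trans_le hy
  have hK := tailConst_nonneg hq
  unfold gpdf
  rw [← ENNReal.ofReal_mul (by positivity), ← ENNReal.ofReal_mul (by positivity),
    ← ENNReal.ofReal_mul (by positivity), ← ENNReal.ofReal_mul (by positivity)]
  apply ENNReal.ofReal_le_ofReal
  have hs : √(2 * Real.pi * (2 * σ) ^ 2) = 2 * √(2 * Real.pi * σ ^ 2) := by
    rw [show 2 * Real.pi * (2 * σ) ^ 2 = 2 ^ 2 * (2 * Real.pi * σ ^ 2) by ring,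
      Real.sqrt_mul (by norm_num), Real.sqrt_sq (by norm_num)]
  rw [hs]
  set N := (√(2 * Real.pi * σ ^ 2))⁻¹ with hN
  have h1 : y ^ q = τ ^ q * (y / τ) ^ q := by
    rw [← Real.mul_rpow hτ0.le (by positivity)]
    congr 1; field_simp
  have h2 := rpow_le_exp hq (x := y / τ) (by positivity)
  have hexp : -(y - 0) ^ 2 / (2 * σ ^ 2) + y / τ / 2 ≤
      1 / 2 + -(y - -τ) ^ 2 / (2 * (2 * σ) ^ 2) := by
    have h3 : (y / τ - 1) * (4 * σ ^ 2) ≤ (y - τ) * (3 * y + τ) := by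
      calc (y / τ - 1) * (4 * σ ^ 2) ≤ (y / τ - 1) * (4 * τ ^ 2) := by
            have : 0 ≤ y / τ - 1 := by
              rw [sub_nonneg, le_div_iff₀ hτ0]; linarith
            gcongr
        _ = (y - τ) * (4 * τ) := by field_simp
        _ ≤ (y - τ) * (3 * y + τ) := by
            have : 0 ≤ y - τ := by linarith
            gcongr; linarith
    have h4 : (y / τ - 1) / 2 ≤ (y - τ) * (3 * y + τ) / (8 * σ ^ 2) := by
      rw [le_div_iff₀ (by positivity)]; linarith
    have h5 : (y - τ) * (3 * y + τ) / (8 * σ ^ 2) =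
        y ^ 2 / (2 * σ ^ 2) - (y + τ) ^ 2 / (2 * (2 * σ) ^ 2) := by
      field_simp; ring
    rw [h5] at h4
    rw [sub_zero, sub_neg_eq_add, neg_div, neg_div]
    linarith
  calc N * Real.exp (-(y - 0) ^ 2 / (2 * σ ^ 2)) * y ^ q
      ≤ N * Real.exp (-(y - 0) ^ 2 / (2 * σ ^ 2)) *
          (τ ^ q * ((2 * q) ^ q * Real.exp (y / τ / 2))) := by rw [h1]; gcongr
    _ = N * τ ^ q * (2 * q) ^ q * Real.exp (-(y - 0) ^ 2 / (2 * σ ^ 2) + y / τ / 2) := by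
        rw [Real.exp_add]; ring
    _ ≤ N * τ ^ q * (2 * q) ^ q *
          Real.exp (1 / 2 + -(y - -τ) ^ 2 / (2 * (2 * σ) ^ 2)) := by gcongr
    _ = _ := by
        rw [Real.exp_add, mul_inv, tailConst]; ring

/-- The dilation `z ↦ 2 z - τ` fixes `τ`, so `2 Z - τ ≥ τ` exactly when `Z ≥ τ`; hence the
truncated moment is at most a constant times `τ ^ q` times the tail probability. -/
lemma truncated_moment {σ τ q : ℝ} (hσ : 0 < σ) (hτ : σ ≤ τ) (hq : 1 ≤ q) :
    ∫⁻ y in Set.Ici τ, ENNReal.ofReal (y ^ q) ∂(gauss 0 σ) ≤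
      ENNReal.ofReal (2 * tailConst q * τ ^ q) * gauss 0 σ (Set.Ici τ) := by
  have hm : Measurable fun y : ℝ => ENNReal.ofReal (y ^ q) := by fun_prop
  calc ∫⁻ y in Set.Ici τ, ENNReal.ofReal (y ^ q) ∂(gauss 0 σ)
      = ∫⁻ y in Set.Ici τ, gpdf 0 σ y * ENNReal.ofReal (y ^ q) := by
        rw [gauss_eq hσ, restrict_withDensity measurableSet_Ici,
          lintegral_withDensity_eq_lintegral_mul _ (measurable_gpdf _ _) hm]
        rfl
    _ ≤ ∫⁻ y in Set.Ici τ, ENNReal.ofReal (2 * tailConst q * τ ^ q) * gpdf (-τ) (2 * σ) y :=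
        setLIntegral_mono ((measurable_gpdf _ _).const_mul _)
          fun y hy => rpow_mul_gpdf_le hσ hτ hq hy
    _ = ENNReal.ofReal (2 * tailConst q * τ ^ q) * gauss (-τ) (2 * σ) (Set.Ici τ) := by
        rw [lintegral_const_mul _ (measurable_gpdf _ _), gauss_eq (by positivity : 0 < 2 * σ),
          withDensity_apply _ measurableSet_Ici]
    _ = _ := by
        rw [gauss_Ici (by positivity : 0 < 2 * σ), gauss_Ici hσ]
        congr 3
        field_simp; ring

/-! ### The risk of hard thresholding -/

/-- The scalar hard-thresholding rule at level `τ`. -/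
def thr (τ y : ℝ) : ℝ := if τ ≤ |y| then y else 0

lemma measurable_thr (τ : ℝ) : Measurable (thr τ) :=
  Measurable.ite (measurableSet_le measurable_const (by fun_prop)) measurable_id measurable_const

lemma measurable_hardThr (p : ℕ) (τ : ℝ) : Measurable (hardThr p τ) := by
  rw [measurable_pi_iff]
  intro j
  exact (measurable_thr τ).comp (measurable_pi_apply j)

lemma coordRisk_hardThr (p : ℕ) (σ q τ : ℝ) (β : Fin p → ℝ) (j : Fin p) :
    coordRisk p σ q (hardThr p τ) β j =
      ∫⁻ y, ENNReal.ofReal (|thr τ y - β j| ^ q) ∂(gauss (β j) σ) := by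
  have h := measurePreserving_eval (fun j => gauss (β j) σ) j
  have hm : Measurable fun y => ENNReal.ofReal (|thr τ y - β j| ^ q) := by
    have := measurable_thr τ
    fun_prop
  rw [← h.lintegral_comp hm]
  rfl

lemma thr_risk_zero {σ τ q : ℝ} (hσ : 0 < σ) (hτ : σ ≤ τ) (hq : 1 ≤ q) :
    ∫⁻ y, ENNReal.ofReal (|thr τ y| ^ q) ∂(gauss 0 σ) ≤
      ENNReal.ofReal (4 * tailConst q) * (ENNReal.ofReal (τ ^ q) * gauss 0 σ (Set.Ici τ)) := by
  have hτ0 : 0 < τ := hσ.trans_le hτ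
  have hK := tailConst_nonneg hq
  set h : ℝ → ℝ≥0∞ := (Set.Ici τ).indicator fun y => ENNReal.ofReal (y ^ q) with hh
  have hm : Measurable h := Measurable.indicator (by fun_prop) measurableSet_Ici
  have hpt : ∀ y, ENNReal.ofReal (|thr τ y| ^ q) ≤ h y + h (-y) := by
    intro y
    unfold thr
    split_ifs with hy
    · rcases le_abs.mp hy with h1 | h1
      · refine le_add_right ?_
        rw [hh, Set.indicator_of_mem (Set.mem_Ici.mpr h1), abs_of_nonneg (by linarith)]
      · refine le_add_left ?_
        rw [hh, Set.indicator_of_mem (Set.mem_Ici.mpr h1), abs_of_nonpos (by linarith)]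
    · rw [abs_zero, Real.zero_rpow (by linarith)]; simp
  calc _ ≤ ∫⁻ y, (h y + h (-y)) ∂(gauss 0 σ) := lintegral_mono hpt
    _ = 2 * ∫⁻ y, h y ∂(gauss 0 σ) := by
        rw [lintegral_add_left hm, lintegral_gauss_neg 0 σ hm, neg_zero, two_mul]
    _ ≤ 2 * (ENNReal.ofReal (2 * tailConst q * τ ^ q) * gauss 0 σ (Set.Ici τ)) := by
        rw [hh, lintegral_indicator measurableSet_Ici]
        gcongr
        exact truncated_moment hσ hτ hq
    _ = _ := by
        rw [show (2 : ℝ≥0∞) = ENNReal.ofReal 2 by simp, ← mul_assoc, ← mul_assoc,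
          ← ENNReal.ofReal_mul (by norm_num), ← ENNReal.ofReal_mul (by positivity)]
        congr 2; ring

lemma gauss_abs_lt {σ τ : ℝ} (b : ℝ) :
    gauss b σ {y | |y| < τ} ≤ gauss |b| σ (Set.Iio τ) := by
  rcases le_total 0 b with hb | hb
  · rw [abs_of_nonneg hb]
    exact measure_mono fun y (hy : |y| < τ) => (abs_lt.mp hy).2
  · have h : (gauss b σ).map (fun x => -x) = gauss (-b) σ := gaussianReal_map_neg
    rw [abs_of_nonpos hb, ← h, Measure.map_apply (by fun_prop) measurableSet_Iio]
    refine measure_mono fun y (hy : |y| < τ) => ?_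
    have := (abs_lt.mp hy).1
    simp only [Set.mem_preimage, Set.mem_Iio]
    linarith

lemma thr_risk_nonzero {σ τ q : ℝ} (hσ : 0 < σ) (b : ℝ) :
    ∫⁻ y, ENNReal.ofReal (|thr τ y - b| ^ q) ∂(gauss b σ) ≤
      ENNReal.ofReal (σ ^ q) * absMoment q +
        ENNReal.ofReal (|b| ^ q) * gauss |b| σ (Set.Iio τ) := by
  have hS : MeasurableSet {y : ℝ | |y| < τ} := measurableSet_lt (by fun_prop) measurable_const
  have hpt : ∀ y, ENNReal.ofReal (|thr τ y - b| ^ q) ≤ ENNReal.ofReal (|y - b| ^ q) +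
      {y : ℝ | |y| < τ}.indicator (fun _ => ENNReal.ofReal (|b| ^ q)) y := by
    intro y
    unfold thr
    split_ifs with hy
    · exact le_add_right le_rfl
    · refine le_add_left ?_
      rw [Set.indicator_of_mem (by simpa using hy), zero_sub, abs_neg]
  calc _ ≤ _ := lintegral_mono hpt
    _ = ENNReal.ofReal (σ ^ q) * absMoment q +
        ENNReal.ofReal (|b| ^ q) * gauss b σ {y | |y| < τ} := by
        rw [lintegral_add_left (by fun_prop), lintegral_noise hσ, lintegral_indicator hS,
          setLIntegral_const]
    _ ≤ _ := add_le_add le_rfl (mul_le_mul_right (gauss_abs_lt b) _)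

lemma markov_low {q t : ℝ} (hq : 1 ≤ q) (ht : 0 < t) :
    ENNReal.ofReal (t ^ q) * gauss 0 1 (Set.Iio (-t)) ≤ absMoment q := by
  calc _ ≤ ENNReal.ofReal (t ^ q) *
        gauss 0 1 {x | ENNReal.ofReal (t ^ q) ≤ ENNReal.ofReal (|x| ^ q)} := by
        gcongr
        intro x hx
        have h1 : x < -t := hx
        apply ENNReal.ofReal_le_ofReal
        have : t ≤ |x| := by rw [abs_of_neg (by linarith)]; linarith
        gcongr
    _ ≤ _ := mul_meas_ge_le_lintegral (by fun_prop) _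

/-- The cost of missing a spike of size `b ≥ a`, where `A = max a t*` and `τ` is the threshold:
the hypothesis `hA` says that `τ = A` when `A > a`. -/
lemma miss_cost {σ τ q a A b : ℝ} (hσ : 0 < σ) (hτ : σ ≤ τ) (hq : 1 ≤ q) (hτA : τ ≤ A)
    (hA : a < A → τ = A) (hb : a ≤ b) (hb0 : 0 < b) :
    ENNReal.ofReal (b ^ q) * gauss b σ (Set.Iio τ) ≤
      (lowProb⁻¹ + ENNReal.ofReal (2 ^ q)) * (ENNReal.ofReal (A ^ q) * gauss A σ (Set.Iio τ)) +
        ENNReal.ofReal (2 ^ q) * (ENNReal.ofReal (σ ^ q) * absMoment q) := by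
  have hτ0 : 0 < τ := hσ.trans_le hτ
  -- If `b < A` then `τ = A` and the miss probability of a spike of size `A` is of constant order.
  rcases lt_or_ge b A with hbA | hbA
  · have hτ' : τ = A := hA (by linarith)
    have h1 : lowProb ≤ gauss A σ (Set.Iio τ) := by
      rw [gauss_Iio hσ, hτ', sub_self, zero_div]
      exact measure_mono (Set.Iio_subset_Iio (by norm_num))
    refine le_add_right ?_
    rw [add_mul]
    refine le_add_right ?_
    calc _ ≤ ENNReal.ofReal (A ^ q) * 1 := by
          gcongr
          exact prob_le_one
      _ = ENNReal.ofReal (A ^ q) * (lowProb⁻¹ * lowProb) := by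
          rw [ENNReal.inv_mul_cancel lowProb_ne_zero lowProb_ne_top]
      _ ≤ ENNReal.ofReal (A ^ q) * (lowProb⁻¹ * gauss A σ (Set.Iio τ)) := by gcongr
      _ = _ := by ring
  -- If `A ≤ b ≤ 2 τ ≤ 2 A`, compare with a spike of size `A`; if `b > 2 τ`, a miss requires noise
  -- of size at least `b / 2`, and Markov's inequality applies.
  rcases le_or_gt b (2 * τ) with hbτ | hbτ
  · refine le_add_right ?_
    rw [add_mul]
    refine le_add_left ?_
    rw [← mul_assoc, ← ENNReal.ofReal_mul (by positivity),
      ← Real.mul_rpow (by norm_num) (by linarith), gauss_Iio hσ, gauss_Iio hσ]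
    gcongr
    linarith
  · refine le_add_left ?_
    have h2 := markov_low hq (t := b / (2 * σ)) (by positivity)
    calc ENNReal.ofReal (b ^ q) * gauss b σ (Set.Iio τ)
        ≤ ENNReal.ofReal (2 ^ q * (σ ^ q * (b / (2 * σ)) ^ q)) *
            gauss 0 1 (Set.Iio (-(b / (2 * σ)))) := by
          rw [gauss_Iio hσ]
          have e : b ^ q = 2 ^ q * (σ ^ q * (b / (2 * σ)) ^ q) := by
            rw [← Real.mul_rpow hσ.le (by positivity),
              ← Real.mul_rpow (by norm_num) (by positivity)]
            congr 1; field_simp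
          rw [e]
          gcongr
          rw [div_le_iff₀ hσ]
          have : -(b / (2 * σ)) * σ = -(b / 2) := by field_simp
          rw [this]; linarith
      _ = ENNReal.ofReal (2 ^ q) * (ENNReal.ofReal (σ ^ q) *
            (ENNReal.ofReal ((b / (2 * σ)) ^ q) * gauss 0 1 (Set.Iio (-(b / (2 * σ)))))) := by
          rw [ENNReal.ofReal_mul (by positivity), ENNReal.ofReal_mul (by positivity)]; ring
      _ ≤ _ := by gcongr

/-- Each of the `p` coordinates contributes at most the false-positive cost, and each of the at most
`s` nonzero ones at most the cost of a miss plus noise. -/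
lemma maxRisk_hardThr_le {p s : ℕ} {σ τ q a A : ℝ} (hσ : 0 < σ) (hτ : σ ≤ τ)
    (hq : 1 ≤ q) (hτA : τ ≤ A) (hA : a < A → τ = A) :
    maxRisk p s σ q a (hardThr p τ) ≤
      p * (ENNReal.ofReal (4 * tailConst q) *
        (ENNReal.ofReal (A ^ q) * gauss 0 σ (Set.Ici τ))) +
      s * ((lowProb⁻¹ + ENNReal.ofReal (2 ^ q)) *
          (ENNReal.ofReal (A ^ q) * gauss A σ (Set.Iio τ)) +
        (1 + ENNReal.ofReal (2 ^ q)) * (ENNReal.ofReal (σ ^ q) * absMoment q)) := by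
  set Z := ENNReal.ofReal (4 * tailConst q) *
    (ENNReal.ofReal (A ^ q) * gauss 0 σ (Set.Ici τ)) with hZ
  set W := (lowProb⁻¹ + ENNReal.ofReal (2 ^ q)) *
      (ENNReal.ofReal (A ^ q) * gauss A σ (Set.Iio τ)) +
    (1 + ENNReal.ofReal (2 ^ q)) * (ENNReal.ofReal (σ ^ q) * absMoment q) with hW
  have hτ0 : 0 < τ := hσ.trans_le hτ
  unfold maxRisk
  refine iSup₂_le fun β hβ => ?_
  rw [seqRisk_eq_sum σ q (measurable_hardThr p τ)]
  have hj : ∀ j, coordRisk p σ q (hardThr p τ) β j ≤ Z + if β j ≠ 0 then W else 0 := by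
    intro j
    rw [coordRisk_hardThr]
    split_ifs with h
    · refine le_add_left ((thr_risk_nonzero hσ (β j)).trans ?_)
      have h1 := miss_cost hσ hτ hq hτA hA (hβ.2 j h) (abs_pos.mpr h)
      calc _ ≤ _ := add_le_add le_rfl h1
        _ = W := by rw [hW]; ring
    · rw [not_not.mp h]
      simp only [sub_zero, add_zero]
      refine (thr_risk_zero hσ hτ hq).trans ?_
      rw [hZ]
      gcongr
  calc _ ≤ ∑ j, (Z + if β j ≠ 0 then W else 0) := Finset.sum_le_sum fun j _ => hj j
    _ = p * Z + (Finset.univ.filter fun i => β i ≠ 0).card * W := by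
        rw [Finset.sum_add_distrib, ← Finset.sum_filter]
        simp
    _ ≤ _ := by
        gcongr
        exact hβ.1

end UpperBound

/-! ### Comparison of the two risks -/

lemma minimax_mono {p s : ℕ} {σ q a A : ℝ} (h : a ≤ A) :
    minimax p s σ q A ≤ minimax p s σ q a := by
  unfold minimax maxRisk
  refine iInf₂_mono fun est _ => ?_
  refine iSup₂_le fun β hβ => le_iSup₂_of_le β ⟨hβ.1, fun i hi => h.trans (hβ.2 i hi)⟩ le_rfl

lemma lowProb_le_testErr {σ : ℝ} (hσ : 0 < σ) (a : ℝ) : lowProb ≤ testErr σ 0 a σ := by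
  refine le_add_right (le_of_eq ?_)
  rw [gauss_Iio hσ, lowProb]
  congr 2
  field_simp; ring

/-- The constant bounding the ratio of the risk of hard thresholding to the minimax risk; it depends
only on `q`. -/
def riskConst (q : ℝ) : ℝ≥0∞ :=
  (2 * ENNReal.ofReal (4 * tailConst q) + (lowProb⁻¹ + ENNReal.ofReal (2 ^ q))) *
      (2 * ENNReal.ofReal (2 ^ q)) +
    (1 + ENNReal.ofReal (2 ^ q)) * absMoment q * (lowProb⁻¹ * (2 * ENNReal.ofReal (2 ^ q)))

lemma riskConst_ne_top {q : ℝ} (hq : 1 ≤ q) : riskConst q ≠ ∞ := by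
  have h1 := absMoment_ne_top hq
  have h2 : lowProb⁻¹ ≠ ∞ := ENNReal.inv_ne_top.mpr lowProb_ne_zero
  unfold riskConst
  finiteness

lemma ofReal_half_rpow {x q : ℝ} (hx : 0 ≤ x) :
    ENNReal.ofReal (x ^ q) = ENNReal.ofReal (2 ^ q) * ENNReal.ofReal ((x / 2) ^ q) := by
  rw [← ENNReal.ofReal_mul (by positivity), ← Real.mul_rpow (by norm_num) (by positivity)]
  congr 2; ring

/-- Corollary (the hard-thresholding estimator is minimax optimal up to a constant). -/
theorem stmt_6 (q : ℝ) (hq : 1 ≤ q) :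
    ∃ C : ℝ, 0 < C ∧ ∀ (σ a : ℝ) (s p : ℕ), 0 < σ → 0 < a → 1 ≤ s →
      (s : ℝ) ≤ (p : ℝ) / 4 → 8 * q * Real.log (Real.log p) ≤ (s : ℝ) →
      maxRisk p s σ q a (hardThr p (tFun p s σ (max a (tStar p s σ))))
        ≤ ENNReal.ofReal C * minimax p s σ q a := by
  refine ⟨(riskConst q).toReal + 1, by positivity, ?_⟩
  intro σ a s p hσ ha hs hsp _
  have hs0 : (0 : ℝ) < s := by exact_mod_cast hs
  have hps : 4 ≤ (p : ℝ) / s := by rw [le_div_iff₀ hs0]; linarith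
  set L := Real.log ((p : ℝ) / s - 1) with hLdef
  have hexpL : Real.exp L = (p : ℝ) / s - 1 := Real.exp_log (by linarith)
  have hL : 1 ≤ L := by
    rw [hLdef, Real.le_log_iff_exp_le (by linarith)]
    linarith [Real.exp_one_lt_three]
  set A := max a (tStar p s σ) with hAdef
  have htS : tStar p s σ = σ * √(2 * L) := rfl
  have htS2 : (tStar p s σ) ^ 2 = 2 * σ ^ 2 * L := by
    rw [htS, mul_pow, Real.sq_sqrt (by linarith)]; ring
  have htS0 : 0 < tStar p s σ := by rw [htS]; positivity
  have hA0 : 0 < A := lt_max_of_lt_left ha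
  have hA2 : 2 * σ ^ 2 * L ≤ A ^ 2 := by
    rw [← htS2]; exact pow_le_pow_left₀ htS0.le (le_max_right _ _) 2
  set τ := tFun p s σ A with hτdef
  have hτeq : τ = A / 2 + σ ^ 2 * L / A := rfl
  have hAτ : A * τ = A ^ 2 / 2 + σ ^ 2 * L := by rw [hτeq]; field_simp
  have hτA : τ ≤ A := by
    refine le_of_mul_le_mul_left ?_ hA0
    rw [hAτ]; linarith
  have hστ : σ ≤ τ := by
    refine le_of_mul_le_mul_left ?_ hA0
    rw [hAτ]
    nlinarith [sq_nonneg (A - σ), sq_nonneg σ]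
  have hA : a < A → τ = A := by
    intro h
    have hAS : A = tStar p s σ := by
      rcases max_choice a (tStar p s σ) with h' | h'
      · rw [hAdef, h'] at h; exact absurd h (lt_irrefl _)
      · exact h'
    refine mul_left_cancel₀ hA0.ne' ?_
    rw [hAτ]
    rw [← hAS] at htS2
    linarith
  -- Lower bounds.
  set α := gauss A σ (Set.Iio τ) with hα
  set ζ := ENNReal.ofReal (Real.exp L) * gauss 0 σ (Set.Ici τ) with hζ
  have hsm : s * (p / s) ≤ p := Nat.mul_div_le p s
  have hexpm : Real.exp L ≤ ((p / s : ℕ) : ℝ) := by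
    rw [hexpL, ← Nat.floor_div_eq_div (K := ℝ)]
    linarith [Nat.lt_floor_add_one ((p : ℝ) / s)]
  have hm : 0 < p / s := by
    have := (Real.exp_pos L).trans_le hexpm
    exact_mod_cast this
  have hspNat : s ≤ p := by
    have : (s : ℝ) ≤ p := by linarith
    exact_mod_cast this
  set M := minimax p s σ q a with hM
  have hlow1 : s * (ENNReal.ofReal ((A / 2) ^ q) * (α + ζ)) ≤ 2 * M := by
    have h := minimax_lower_spike hm hsm hσ hA0 hq hexpm
    rw [testErr, zero_add, zero_add, ← hτeq] at h
    refine h.trans ?_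
    gcongr
    exact minimax_mono (le_max_left _ _)
  have hspike : s * (ENNReal.ofReal (A ^ q) * (α + ζ)) ≤ 2 * ENNReal.ofReal (2 ^ q) * M := by
    calc _ = ENNReal.ofReal (2 ^ q) * (s * (ENNReal.ofReal ((A / 2) ^ q) * (α + ζ))) := by
          rw [ofReal_half_rpow hA0.le]; ring
      _ ≤ ENNReal.ofReal (2 ^ q) * (2 * M) := by gcongr
      _ = _ := by ring
  have hnoise : s * ENNReal.ofReal (σ ^ q) ≤ lowProb⁻¹ * (2 * ENNReal.ofReal (2 ^ q)) * M := by
    have h := minimax_lower_noise (a := a) hspNat hσ hq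
    calc s * ENNReal.ofReal (σ ^ q)
        = lowProb⁻¹ * ENNReal.ofReal (2 ^ q) *
            (s * (ENNReal.ofReal ((σ / 2) ^ q) * lowProb)) := by
          rw [ofReal_half_rpow hσ.le]
          calc _ = lowProb⁻¹ * lowProb *
                (s * (ENNReal.ofReal (2 ^ q) * ENNReal.ofReal ((σ / 2) ^ q))) := by
                rw [ENNReal.inv_mul_cancel lowProb_ne_zero lowProb_ne_top, one_mul]
            _ = _ := by ring
      _ ≤ lowProb⁻¹ * ENNReal.ofReal (2 ^ q) * (2 * M) := by
          refine mul_le_mul' le_rfl (le_trans ?_ h)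
          gcongr
          exact lowProb_le_testErr hσ a
      _ = _ := by ring
  -- The null coordinates: there are `p = s (e^L + 1) ≤ 2 s e^L` coordinates in total.
  have hp : (p : ℝ≥0∞) ≤ 2 * s * ENNReal.ofReal (Real.exp L) := by
    rw [← ENNReal.ofReal_natCast p, ← ENNReal.ofReal_natCast s,
      show (2 : ℝ≥0∞) = ENNReal.ofReal 2 by simp, ← ENNReal.ofReal_mul (by norm_num),
      ← ENNReal.ofReal_mul (by positivity)]
    apply ENNReal.ofReal_le_ofReal
    rw [hexpL]
    have : 2 * (s : ℝ) * ((p : ℝ) / s - 1) = 2 * p - 2 * s := by field_simp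
    rw [this]; linarith
  set K := ENNReal.ofReal (4 * tailConst q) with hK
  set U := lowProb⁻¹ + ENNReal.ofReal (2 ^ q) with hU
  set V := 1 + ENNReal.ofReal (2 ^ q) with hV
  calc maxRisk p s σ q a (hardThr p τ)
      ≤ p * (K * (ENNReal.ofReal (A ^ q) * gauss 0 σ (Set.Ici τ))) +
        s * (U * (ENNReal.ofReal (A ^ q) * α) + V * (ENNReal.ofReal (σ ^ q) * absMoment q)) :=
        maxRisk_hardThr_le hσ hστ hq hτA hA
    _ ≤ 2 * s * ENNReal.ofReal (Real.exp L) *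
          (K * (ENNReal.ofReal (A ^ q) * gauss 0 σ (Set.Ici τ))) +
        s * (U * (ENNReal.ofReal (A ^ q) * α) + V * (ENNReal.ofReal (σ ^ q) * absMoment q)) := by
        gcongr
    _ = 2 * K * (s * (ENNReal.ofReal (A ^ q) * ζ)) + U * (s * (ENNReal.ofReal (A ^ q) * α)) +
        V * absMoment q * (s * ENNReal.ofReal (σ ^ q)) := by rw [hζ]; ring
    _ ≤ 2 * K * (s * (ENNReal.ofReal (A ^ q) * (α + ζ))) +
        U * (s * (ENNReal.ofReal (A ^ q) * (α + ζ))) +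
        V * absMoment q * (s * ENNReal.ofReal (σ ^ q)) := by
        gcongr
        · exact le_add_self
        · exact le_self_add
    _ ≤ 2 * K * (2 * ENNReal.ofReal (2 ^ q) * M) + U * (2 * ENNReal.ofReal (2 ^ q) * M) +
        V * absMoment q * (lowProb⁻¹ * (2 * ENNReal.ofReal (2 ^ q)) * M) := by gcongr
    _ = riskConst q * M := by rw [riskConst]; ring
    _ ≤ ENNReal.ofReal ((riskConst q).toReal + 1) * M := by
        gcongr
        rw [← ENNReal.ofReal_toReal (riskConst_ne_top hq)]
        apply ENNReal.ofReal_le_ofReal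
        rw [ENNReal.toReal_ofReal ENNReal.toReal_nonneg]
        linarith

end
end

section
/- Fix q ≥ 1 and σ > 0. Let (p_n) and (s_n) be sequences of positive integers with s_n ≤ p_n/4 for all n and s_n/p_n → 0, and let (a_n) be positive reals with a_n ≤ σ√(2 log(p_n/s_n − 1)) for all n. Let β̂^{a_n} be the hard-thresholding estimator at level n, β̂^{a_n}_j(Y) = Y_j·1{|Y_j| ≥ t_n(max(a_n, t*_n))}. Then: limsup_n [ sup_{β ∈ Ω^{p_n}_{s_n,a_n}} E_β‖β̂^{a_n}(Y) − β‖_q^q ] / [ s_n σ^q (2 log(p_n/s_n − 1))^{q/2} ] ≤ 1. -/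
/-!
Put `u = √(2 log (p/s - 1))`. Since `t*` is the fixed point of `t`, for `a ≤ t*` the threshold is
`t* = σ u`. The loss of a coordinate is then controlled separately on and off the support of `β`.

* If `β_j ≠ 0`, the loss never exceeds `(σ u + σ |ε|)^q`: either `Y_j` is kept and the error is
  `σ |ε|`, or `|Y_j| < σ u` and `|β_j| ≤ σ u + σ |ε|`. The risk is at most
  `σ^q u^q E (1 + |ε|/u)^q`.
* If `β_j = 0`, the risk is the tail moment `σ^q E [|ε|^q ; |ε| ≥ u]`. Translating the Gaussian
  density by `u` rewrites it as `2 σ^q u^q e^{-u²/2} E [(1 + ε/u)^q e^{-uε} ; ε ≥ 0]`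
  (`tail_two_sided`).

There are at most `s` coordinates of the first kind and at most `p` of the second, and
`p e^{-u²/2} = p s / (p - s) ≤ 4 s / 3`, so the normalised maximal risk is at most
`E (1 + |ε|/u)^q + 3 E [(1 + ε/u)^q e^{-uε} ; ε ≥ 0]` (`maxRisk_le`). As `s/p → 0`, `u → ∞`, and by
dominated convergence the first expectation tends to `1` and the second to `0`.
-/

open MeasureTheory ProbabilityTheory Filter
open scoped ENNReal NNReal BigOperators Classical

noncomputable section

/-- `E (1 + |ε|/u)^q`: bound for the risk at a nonzero coordinate, divided by `σ^q u^q`. -/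
def auxA (q u : ℝ) : ℝ≥0∞ := ∫⁻ x, ENNReal.ofReal ((1 + |x| / u) ^ q) ∂stdG

/-- `E [(1 + ε/u)^q e^{-uε} ; ε ≥ 0]`: risk at a zero coordinate, up to the factor
`2 σ^q u^q e^{-u²/2}`. -/
def auxB (q u : ℝ) : ℝ≥0∞ :=
  ∫⁻ x in Set.Ici 0, ENNReal.ofReal ((1 + |x| / u) ^ q * Real.exp (-(u * x))) ∂stdG

instance : IsProbabilityMeasure stdG := by unfold stdG; infer_instance

lemma one_add_abs_rpow_le (q x : ℝ) (hq : 1 ≤ q) :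
    (1 + |x|) ^ q ≤ 2 ^ q * (1 + |x| ^ q) := by
  have hx := abs_nonneg x
  have hq0 : 0 ≤ q := by linarith
  rcases le_total |x| 1 with h | h
  · calc (1 + |x|) ^ q ≤ 2 ^ q := Real.rpow_le_rpow (by linarith) (by linarith) hq0
      _ ≤ _ := le_mul_of_one_le_right (by positivity) (by linarith [Real.rpow_nonneg hx q])
  · calc (1 + |x|) ^ q ≤ (2 * |x|) ^ q := Real.rpow_le_rpow (by linarith) (by linarith) hq0
      _ = 2 ^ q * |x| ^ q := Real.mul_rpow (by norm_num) hx
      _ ≤ _ := by gcongr; linarith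

lemma lintegral_bound_ne_top (q : ℝ) (hq : 1 ≤ q) :
    ∫⁻ x, ENNReal.ofReal ((1 + |x|) ^ q) ∂stdG ≠ ⊤ := by
  have h1 : MemLp (id : ℝ → ℝ) (ENNReal.ofReal q) stdG := by
    have := memLp_id_gaussianReal (μ := 0) (v := 1) (Real.toNNReal q)
    exact this
  have h2 : Integrable (fun x : ℝ => |x| ^ q) stdG := by
    have := h1.integrable_norm_rpow (by simp; linarith) (by simp)
    simpa [ENNReal.toReal_ofReal (by linarith : 0 ≤ q)] using this
  have h3 : Integrable (fun x : ℝ => 2 ^ q * (1 + |x| ^ q)) stdG :=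
    ((integrable_const 1).add h2).const_mul _
  refine ne_top_of_le_ne_top h3.lintegral_lt_top.ne (lintegral_mono fun x => ?_)
  exact ENNReal.ofReal_le_ofReal (one_add_abs_rpow_le q x hq)

lemma tendsto_base (q x : ℝ) :
    Tendsto (fun u : ℝ => (1 + |x| / u) ^ q) atTop (nhds 1) := by
  have h : Tendsto (fun u : ℝ => 1 + |x| / u) atTop (nhds (1 + 0)) :=
    tendsto_const_nhds.add (tendsto_const_nhds.div_atTop tendsto_id)
  have := h.rpow_const (p := q) (Or.inl (by norm_num))
  simpa using this

lemma base_le (q u x : ℝ) (hq : 1 ≤ q) (hu : 1 ≤ u) : (1 + |x| / u) ^ q ≤ (1 + |x|) ^ q := by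
  have hx := abs_nonneg x
  apply Real.rpow_le_rpow (by positivity) _ (by linarith)
  linarith [div_le_self hx hu]

lemma tendsto_auxA (q : ℝ) (hq : 1 ≤ q) : Tendsto (auxA q) atTop (nhds 1) := by
  have key : Tendsto (auxA q) atTop (nhds (∫⁻ _, 1 ∂stdG)) := by
    refine tendsto_lintegral_filter_of_dominated_convergence
      (fun x => ENNReal.ofReal ((1 + |x|) ^ q)) ?_ ?_ (lintegral_bound_ne_top q hq) ?_
    · exact Eventually.of_forall fun u => by fun_prop
    · filter_upwards [eventually_ge_atTop 1] with u hu
      exact ae_of_all _ fun x => ENNReal.ofReal_le_ofReal (base_le q u x hq hu)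
    · refine ae_of_all _ fun x => ?_
      have := ENNReal.tendsto_ofReal (tendsto_base q x)
      simpa using this
  simpa using key

lemma tendsto_auxB (q : ℝ) (hq : 1 ≤ q) : Tendsto (auxB q) atTop (nhds 0) := by
  have key : Tendsto (auxB q) atTop (nhds (∫⁻ _ in Set.Ici 0, 0 ∂stdG)) := by
    refine tendsto_lintegral_filter_of_dominated_convergence
      (fun x => ENNReal.ofReal ((1 + |x|) ^ q)) ?_ ?_
      (ne_top_of_le_ne_top (lintegral_bound_ne_top q hq) (setLIntegral_le_lintegral _ _)) ?_
    · exact Eventually.of_forall fun u => by fun_prop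
    · filter_upwards [eventually_ge_atTop 1] with u hu
      filter_upwards [ae_restrict_mem measurableSet_Ici] with x hx
      refine ENNReal.ofReal_le_ofReal ((mul_le_of_le_one_right (by positivity) ?_).trans
        (base_le q u x hq hu))
      rw [Real.exp_le_one_iff]
      have : 0 ≤ u * x := mul_nonneg (by linarith) hx
      linarith
    · have hne : ∀ᵐ x ∂stdG, x ≠ 0 := by
        have : NullSingletonClass stdG := nullSingletonClass_gaussianReal (by norm_num)
        rw [ae_iff]; simp [measure_singleton]
      filter_upwards [ae_restrict_mem measurableSet_Ici, ae_restrict_of_ae hne] with x hx hx0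
      have hxp : 0 < x := lt_of_le_of_ne hx (Ne.symm hx0)
      have h2 : Tendsto (fun u : ℝ => Real.exp (-(u * x))) atTop (nhds 0) :=
        Real.tendsto_exp_neg_atTop_nhds_zero.comp (tendsto_id.atTop_mul_const hxp)
      have := ENNReal.tendsto_ofReal ((tendsto_base q x).mul h2)
      simpa using this
  simpa using key

lemma gauss_eq_map (m σ : ℝ) : gauss m σ = stdG.map (fun x => m + σ * x) := by
  have h1 := gaussianReal_map_const_mul (μ := 0) (v := 1) σ
  have h2 := gaussianReal_map_const_add (μ := σ * 0) (v := NNReal.mk (σ ^ 2) (sq_nonneg σ) * 1) m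
  have h3 : gauss m σ = gaussianReal m (NNReal.mk (σ ^ 2) (sq_nonneg σ)) := rfl
  rw [h3]
  unfold stdG
  rw [← h1, Measure.map_map (by fun_prop) (by fun_prop)] at h2
  rw [show (fun x => m + σ * x) = (fun x => m + x) ∘ (fun x => σ * x) from rfl, h2]
  simp

lemma gaussianPDF_shift (u x : ℝ) :
    gaussianPDF 0 1 (x + u)
      = gaussianPDF 0 1 x * ENNReal.ofReal (Real.exp (-u ^ 2 / 2) * Real.exp (-(u * x))) := by
  unfold gaussianPDF
  rw [← ENNReal.ofReal_mul (gaussianPDFReal_nonneg _ _ _)]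
  congr 1
  unfold gaussianPDFReal
  rw [← Real.exp_add, mul_assoc (_)⁻¹, ← Real.exp_add]
  congr 2
  simp only [sub_zero, NNReal.coe_one]; ring

/-- Upper tail moment: shifting by `u` in the Gaussian density factors out `e^{-u²/2}`. -/
lemma tail_one_sided (q u : ℝ) (hu : 0 < u) :
    ∫⁻ x in Set.Ici u, ENNReal.ofReal (|x| ^ q) ∂stdG
      = ENNReal.ofReal (u ^ q * Real.exp (-u ^ 2 / 2)) * auxB q u := by
  have hd : stdG = volume.withDensity (gaussianPDF 0 1) :=
    gaussianReal_of_var_ne_zero 0 (by norm_num)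
  have hm : Measurable (fun x : ℝ => gaussianPDF 0 1 x) := measurable_gaussianPDF 0 1
  unfold auxB
  rw [← lintegral_const_mul _ (by fun_prop), ← lintegral_indicator measurableSet_Ici,
    ← lintegral_indicator measurableSet_Ici, hd,
    lintegral_withDensity_eq_lintegral_mul _ hm
      (Measurable.indicator (by fun_prop) measurableSet_Ici),
    lintegral_withDensity_eq_lintegral_mul _ hm
      (Measurable.indicator (by fun_prop) measurableSet_Ici),
    ← lintegral_add_right_eq_self _ u]
  refine lintegral_congr fun x => ?_
  simp only [Pi.mul_apply, Set.indicator, Set.mem_Ici, le_add_iff_nonneg_left]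
  split_ifs with hx
  · rw [gaussianPDF_shift, mul_assoc]
    congr 1
    rw [← ENNReal.ofReal_mul (by positivity), ← ENNReal.ofReal_mul (by positivity)]
    congr 1
    have : |x + u| = u * (1 + |x| / u) := by
      rw [abs_of_nonneg (by positivity), abs_of_nonneg hx]; field_simp; ring
    rw [this, Real.mul_rpow hu.le (by positivity)]
    ring
  · simp

lemma tail_two_sided (q u : ℝ) (hu : 0 < u) :
    ∫⁻ x, ENNReal.ofReal (if u ≤ |x| then |x| ^ q else 0) ∂stdG
      ≤ 2 * (ENNReal.ofReal (u ^ q * Real.exp (-u ^ 2 / 2)) * auxB q u) := by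
  set f : ℝ → ℝ≥0∞ := (Set.Ici u).indicator fun x => ENNReal.ofReal (|x| ^ q) with hf
  have hfm : Measurable f := Measurable.indicator (by fun_prop) measurableSet_Ici
  have hneg : ∫⁻ x, f (-x) ∂stdG = ∫⁻ x, f x ∂stdG := by
    have h : stdG.map (fun x => -x) = stdG := by
      unfold stdG; rw [gaussianReal_map_neg]; simp
    conv_rhs => rw [← h, lintegral_map hfm measurable_neg]
  calc _ ≤ ∫⁻ x, (f x + f (-x)) ∂stdG := by
        refine lintegral_mono fun x => ?_
        dsimp only
        split_ifs with hx
        · rcases le_abs.1 hx with h | h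
          · simp [hf, Set.indicator, h]
          · simp [hf, Set.indicator, h]
        · simp
    _ = 2 * ∫⁻ x, f x ∂stdG := by rw [lintegral_add_left hfm, hneg, two_mul]
    _ = _ := by rw [hf, lintegral_indicator measurableSet_Ici, tail_one_sided q u hu]

lemma seqRisk_hardThr (p : ℕ) (σ q τ : ℝ) (β : Fin p → ℝ) :
    seqRisk p σ q (hardThr p τ) β
      = ∑ j, ∫⁻ x, ENNReal.ofReal
          (|(if τ ≤ |β j + σ * x| then β j + σ * x else 0) - β j| ^ q) ∂stdG := by
  have hprob : ∀ j, IsProbabilityMeasure (gauss (β j) σ) := fun j => by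
    rw [gauss_eq_map]; exact Measure.isProbabilityMeasure_map (by fun_prop)
  have hm : ∀ b : ℝ, Measurable fun y : ℝ =>
      ENNReal.ofReal (|(if τ ≤ |y| then y else 0) - b| ^ q) := fun b => by
    have : Measurable fun y : ℝ => if τ ≤ |y| then y else 0 :=
      Measurable.ite (measurableSet_le measurable_const (by fun_prop)) measurable_id
        measurable_const
    fun_prop
  unfold seqRisk hardThr seqModel
  simp_rw [ENNReal.ofReal_sum_of_nonneg (fun j _ => Real.rpow_nonneg (abs_nonneg _) q)]
  have hmj : ∀ j, Measurable fun y : Fin p → ℝ =>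
      ENNReal.ofReal (|(if τ ≤ |y j| then y j else 0) - β j| ^ q) := fun j =>
    (hm (β j)).comp (measurable_pi_apply j)
  rw [lintegral_finsetSum _ (fun j _ => hmj j)]
  refine Finset.sum_congr rfl fun j _ => ?_
  have hp := measurePreserving_eval (fun j => gauss (β j) σ) j
  have h1 := hp.lintegral_comp (hm (β j))
  simp only [Function.eval] at h1
  rw [h1, gauss_eq_map, lintegral_map (hm _) (by fun_prop)]

lemma risk_nonzero (q σ u b : ℝ) (hq : 1 ≤ q) (hσ : 0 < σ) (hu : 0 < u) :
    ∫⁻ x, ENNReal.ofReal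
        (|(if σ * u ≤ |b + σ * x| then b + σ * x else 0) - b| ^ q) ∂stdG
      ≤ ENNReal.ofReal (σ ^ q * u ^ q) * auxA q u := by
  unfold auxA
  rw [← lintegral_const_mul _ (by fun_prop)]
  refine lintegral_mono fun x => ?_
  dsimp only
  rw [← ENNReal.ofReal_mul (by positivity), ← Real.mul_rpow hσ.le hu.le,
    ← Real.mul_rpow (by positivity) (by positivity)]
  refine ENNReal.ofReal_le_ofReal (Real.rpow_le_rpow (abs_nonneg _) ?_ (by linarith))
  have e : σ * u * (1 + |x| / u) = σ * u + |σ * x| := by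
    rw [abs_mul, abs_of_pos hσ]; field_simp
  have hp : 0 < σ * u := by positivity
  rw [e]
  split_ifs with h
  · rw [add_sub_cancel_left]; linarith
  · push Not at h
    have : |b| ≤ |b + σ * x| + |σ * x| := by
      have := abs_sub (b + σ * x) (σ * x)
      simpa using this
    rw [zero_sub, abs_neg]; linarith

lemma risk_zero (q σ u : ℝ) (hq : 1 ≤ q) (hσ : 0 < σ) (hu : 0 < u) :
    ∫⁻ x, ENNReal.ofReal
        (|(if σ * u ≤ |0 + σ * x| then 0 + σ * x else 0) - 0| ^ q) ∂stdG
      ≤ ENNReal.ofReal (σ ^ q * u ^ q) *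
          (ENNReal.ofReal (2 * Real.exp (-u ^ 2 / 2)) * auxB q u) := by
  have e : ∀ x : ℝ, ENNReal.ofReal
        (|(if σ * u ≤ |0 + σ * x| then 0 + σ * x else 0) - 0| ^ q)
      = ENNReal.ofReal (σ ^ q) * ENNReal.ofReal (if u ≤ |x| then |x| ^ q else 0) := fun x => by
    rw [← ENNReal.ofReal_mul (by positivity)]
    congr 1
    simp only [zero_add, sub_zero, abs_mul, abs_of_pos hσ, mul_le_mul_iff_right₀ hσ]
    split_ifs with h
    · rw [abs_mul, abs_of_pos hσ, Real.mul_rpow hσ.le (abs_nonneg _)]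
    · rw [abs_zero, Real.zero_rpow (by linarith), mul_zero]
  simp_rw [e]
  rw [lintegral_const_mul' _ _ ENNReal.ofReal_ne_top]
  refine (mul_le_mul_right (tail_two_sided q u hu) _).trans (le_of_eq ?_)
  rw [ENNReal.ofReal_mul (by positivity), ENNReal.ofReal_mul (by positivity),
    ENNReal.ofReal_mul (by positivity)]
  simp only [ENNReal.ofReal_ofNat]
  ring

/-- Non-asymptotic bound on the maximal risk at threshold `σ u` with `u² = 2 log (p/s - 1)`:
the noise coordinates contribute the factor `p e^{-u²/2} = p s / (p - s) ≤ 4 s / 3`. -/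
lemma maxRisk_le (p s : ℕ) (q σ a u : ℝ) (hq : 1 ≤ q) (hσ : 0 < σ) (hu : 0 < u)
    (hs : 1 ≤ s) (hsp : (s : ℝ) ≤ p / 4) (hL : u ^ 2 = 2 * Real.log ((p : ℝ) / s - 1)) :
    maxRisk p s σ q a (hardThr p (σ * u))
      ≤ ENNReal.ofReal (s * σ ^ q * u ^ q) * (auxA q u + 3 * auxB q u) := by
  have hs0 : (0 : ℝ) < s := by exact_mod_cast hs
  have hexp : (p : ℝ) * (2 * Real.exp (-u ^ 2 / 2)) ≤ s * 3 := by
    have hr : (3 : ℝ) ≤ p / s - 1 := by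
      have : (4 : ℝ) ≤ p / s := by rw [le_div_iff₀ hs0]; linarith
      linarith
    have hps : (0 : ℝ) < p - s := by linarith
    have : Real.exp (-u ^ 2 / 2) = s / (p - s) := by
      rw [hL, show -(2 * Real.log ((p : ℝ) / s - 1)) / 2 = -Real.log ((p : ℝ) / s - 1) by ring,
        Real.exp_neg, Real.exp_log (by linarith)]
      field_simp
    rw [this, show (p : ℝ) * (2 * (s / (p - s))) = (s * (2 * p)) / (p - s) by ring,
      div_le_iff₀ hps]
    nlinarith
  refine iSup₂_le fun β hβ => ?_
  rw [seqRisk_hardThr]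
  set K := ENNReal.ofReal (σ ^ q * u ^ q) with hK
  set E := ENNReal.ofReal (2 * Real.exp (-u ^ 2 / 2)) with hE
  calc _ ≤ ∑ j : Fin p, ((if β j ≠ 0 then K * auxA q u else 0) + K * (E * auxB q u)) := by
        refine Finset.sum_le_sum fun j _ => ?_
        split_ifs with h
        · exact (risk_nonzero q σ u (β j) hq hσ hu).trans le_self_add
        · push Not at h
          rw [h, zero_add]
          exact risk_zero q σ u hq hσ hu
    _ = ((Finset.univ.filter fun i => β i ≠ 0).card : ℝ≥0∞) * (K * auxA q u)
          + (p : ℝ≥0∞) * (K * (E * auxB q u)) := by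
        rw [Finset.sum_add_distrib, ← Finset.sum_filter]
        simp
    _ ≤ (s : ℝ≥0∞) * (K * auxA q u) + K * (((p : ℝ≥0∞) * E) * auxB q u) := by
        refine add_le_add ?_ (le_of_eq (by ring))
        gcongr
        exact hβ.1
    _ ≤ (s : ℝ≥0∞) * (K * auxA q u) + K * (((s : ℝ≥0∞) * 3) * auxB q u) := by
        refine add_le_add le_rfl (mul_le_mul_right (mul_le_mul_left ?_ _) _)
        have := ENNReal.ofReal_le_ofReal hexp
        rw [ENNReal.ofReal_mul (by positivity), ENNReal.ofReal_mul hs0.le] at this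
        simpa only [ENNReal.ofReal_natCast, ENNReal.ofReal_ofNat] using this
    _ = _ := by
        rw [mul_assoc (s : ℝ), ENNReal.ofReal_mul hs0.le, ENNReal.ofReal_natCast]
        ring

/-- Sharp upper bound in the hard recovery regime `a ≤ t*`, as `s/p → 0`. -/
theorem stmt_7 (q σ : ℝ) (hq : 1 ≤ q) (hσ : 0 < σ)
    (p s : ℕ → ℕ) (a : ℕ → ℝ)
    (hs1 : ∀ n, 1 ≤ s n) (hp1 : ∀ n, 1 ≤ p n)
    (hsp : ∀ n, (s n : ℝ) ≤ (p n : ℝ) / 4)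
    (hlim : Tendsto (fun n => (s n : ℝ) / (p n : ℝ)) atTop (nhds 0))
    (ha : ∀ n, 0 < a n) (haU : ∀ n, a n ≤ tStar (p n) (s n) σ) :
    limsup (fun n =>
        maxRisk (p n) (s n) σ q (a n)
          (hardThr (p n) (tFun (p n) (s n) σ (max (a n) (tStar (p n) (s n) σ))))
        / ENNReal.ofReal ((s n : ℝ) * σ ^ q *
            (2 * Real.log ((p n : ℝ) / (s n : ℝ) - 1)) ^ (q / 2))) atTop ≤ 1 := by
  set u : ℕ → ℝ := fun n => Real.sqrt (2 * Real.log ((p n : ℝ) / s n - 1)) with hu_def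
  have hs0 : ∀ n, (0 : ℝ) < s n := fun n => by exact_mod_cast hs1 n
  have hr : ∀ n, (3 : ℝ) ≤ (p n : ℝ) / s n - 1 := fun n => by
    have : (4 : ℝ) ≤ (p n : ℝ) / s n := by rw [le_div_iff₀ (hs0 n)]; linarith [hsp n]
    linarith
  have hlog : ∀ n, 0 < Real.log ((p n : ℝ) / s n - 1) := fun n =>
    Real.log_pos (by linarith [hr n])
  have hu : ∀ n, 0 < u n := fun n => Real.sqrt_pos.2 (by linarith [hlog n])
  have hsq : ∀ n, u n ^ 2 = 2 * Real.log ((p n : ℝ) / s n - 1) := fun n =>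
    Real.sq_sqrt (by linarith [hlog n])
  have hpow : ∀ n, (2 * Real.log ((p n : ℝ) / s n - 1)) ^ (q / 2) = u n ^ q := fun n => by
    rw [← hsq n, ← Real.rpow_natCast, ← Real.rpow_mul (hu n).le]
    congr 1; push_cast; ring
  -- `t*` is the fixed point of `t`, so the threshold is `t* = σ u` for every `a ≤ t*`.
  have hτ : ∀ n, tFun (p n) (s n) σ (max (a n) (tStar (p n) (s n) σ)) = σ * u n := fun n => by
    have hlogu : Real.log ((p n : ℝ) / s n - 1) = u n ^ 2 / 2 := by linarith [hsq n]
    have hun := hu n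
    rw [max_eq_right (haU n), show tStar (p n) (s n) σ = σ * u n from rfl, tFun, hlogu]
    field_simp
    ring
  have hutop : Tendsto u atTop atTop := by
    have h1 : Tendsto (fun n => (p n : ℝ) / s n) atTop atTop := by
      have : Tendsto (fun n => ((s n : ℝ) / p n)⁻¹) atTop atTop := by
        refine tendsto_inv_nhdsGT_zero.comp (tendsto_nhdsWithin_iff.2 ⟨hlim, ?_⟩)
        refine Eventually.of_forall fun n => ?_
        have := hs0 n
        have hp0 : (0 : ℝ) < p n := by exact_mod_cast hp1 n
        exact div_pos this hp0
      simpa using this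
    have h2 : Tendsto (fun n => (p n : ℝ) / s n - 1) atTop atTop :=
      tendsto_atTop_add_const_right _ (-1) h1
    exact Real.tendsto_sqrt_atTop.comp
      ((Real.tendsto_log_atTop.comp h2).const_mul_atTop (by norm_num))
  have hT : Tendsto (fun n => auxA q (u n) + 3 * auxB q (u n)) atTop (nhds 1) := by
    have hB := ENNReal.Tendsto.const_mul (a := 3) ((tendsto_auxB q hq).comp hutop)
      (Or.inr (by norm_num))
    have := ((tendsto_auxA q hq).comp hutop).add hB
    simpa using this
  rw [← hT.limsup_eq]
  refine limsup_le_limsup (Eventually.of_forall fun n => ?_)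
  have h := maxRisk_le (p n) (s n) q σ (a n) (u n) hq hσ (hu n) (hs1 n) (hsp n) (hsq n)
  simp only [hτ n, hpow n]
  refine ENNReal.div_le_of_le_mul ?_
  exact h.trans (mul_comm _ _).le

end
end
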